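/- Let H1, H2, Np > 0, N ≥ 0, and set Nu = H2 + N and a = H1 + H2 + N. Let φ, ψ : [0,∞) → [0,∞) be continuous with φ strictly increasing and ψ nondecreasing. Suppose (ρ, R1, R2) with ρ ∈ (0,1] and R1, R2 ≥ 0 satisfies R1 ≤ (1/2)·log₂(1 + (1−ρ)H1/((1−ρ)Nu + Np)), R2 ≤ (1/2)·log₂(1 + (1−ρ)H2/((1−ρ)N + Np)), and φ(R1) + φ(R2) < ψ(ρ·a) (i.e., the decoding-cost constraint is strict). Then there exists (ρ', R1', R2') with ρ' ∈ [0,1], R1' > R1, R2' > R2, satisfying all three constraints (with non-strict inequalities). In particular, such a rate pair does not lie on the maximum departure region boundary of the SIC scheme. -/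

import Mathlib

/-!
Lowering the power-splitting factor `ρ` strictly raises both users' signal-to-noise ratios. By
continuity of `ψ`, a strict energy constraint survives a small decrease of `ρ`. The decrease makes
both rate constraints strict, and continuity of `φ` then leaves room to raise both rates.
-/

open Filter Set Topology

section OneSidedContinuity

variable {α β γ : Type*} [LinearOrder α] [TopologicalSpace α] [OrderTopology α] [DenselyOrdered α]
  [LinearOrder β] [TopologicalSpace β] [OrderTopology β] [DenselyOrdered β]
  [LinearOrder γ] [TopologicalSpace γ]

theorem exists_mem_Ioo_lt_of_continuousWithinAt_Iio [ClosedIicTopology γ] {f : α → γ} {a b : α}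
    {c : γ} (hf : ContinuousWithinAt f (Iio b) b) (hab : a < b) (hc : c < f b) :
    ∃ x ∈ Ioo a b, c < f x := by
  have : (𝓝[<] b).NeBot := nhdsLT_neBot_of_exists_lt ⟨a, hab⟩
  have hmem : ∀ᶠ x in 𝓝[<] b, x ∈ Ioo a b := Ioo_mem_nhdsLT hab
  exact (hmem.and (hf.eventually_const_lt hc)).exists

theorem exists_mem_Ioo_add_lt_of_continuousWithinAt_Ioi [Add γ] [ContinuousAdd γ]
    [ClosedIciTopology γ] {f : α → γ} {g : β → γ} {x u : α} {y v : β} {c : γ}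
    (hf : ContinuousWithinAt f (Ioi x) x) (hg : ContinuousWithinAt g (Ioi y) y)
    (hxu : x < u) (hyv : y < v) (hc : f x + g y < c) :
    ∃ x' ∈ Ioo x u, ∃ y' ∈ Ioo y v, f x' + g y' < c := by
  have : (𝓝[>] x).NeBot := nhdsGT_neBot_of_exists_gt ⟨u, hxu⟩
  have : (𝓝[>] y).NeBot := nhdsGT_neBot_of_exists_gt ⟨v, hyv⟩
  have hsum : ∀ᶠ p in 𝓝[>] x ×ˢ 𝓝[>] y, f p.1 + g p.2 < c :=
    ((hf.tendsto.comp tendsto_fst).add (hg.tendsto.comp tendsto_snd)).eventually_lt_const hc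
  have hmem : ∀ᶠ p in 𝓝[>] x ×ˢ 𝓝[>] y, p ∈ Ioo x u ×ˢ Ioo y v :=
    prod_mem_prod (Ioo_mem_nhdsGT hxu) (Ioo_mem_nhdsGT hyv)
  obtain ⟨⟨x', y'⟩, ⟨hx', hy'⟩, hlt⟩ := (hmem.and hsum).exists
  exact ⟨x', hx', y', hy', hlt⟩

end OneSidedContinuity

section PowerSplitting

/-- The signal-to-noise ratio at the information decoder of a power-splitting receiver which
harvests the fraction `ρ` of the received power: `H` is the received signal power, `M` the power of
the noise and interference entering before the split, and `Np` the noise power added after it. -/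
noncomputable def psSNR (H M Np ρ : ℝ) : ℝ :=
  (1 - ρ) * H / ((1 - ρ) * M + Np)

/-- The Gaussian-channel rate, in bits per channel use, at signal-to-noise ratio `psSNR H M Np ρ`;
it bounds the rate of a user of the power-splitting receiver. -/
noncomputable def psRate (H M Np ρ : ℝ) : ℝ :=
  (1 / 2) * Real.logb 2 (1 + psSNR H M Np ρ)

variable {H M Np : ℝ}

theorem psSNR_nonneg {ρ : ℝ} (hH : 0 ≤ H) (hM : 0 ≤ M) (hNp : 0 ≤ Np) (hρ : ρ ≤ 1) :
    0 ≤ psSNR H M Np ρ := by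
  have : 0 ≤ 1 - ρ := sub_nonneg.2 hρ
  unfold psSNR
  positivity

theorem psSNR_strictAntiOn (hH : 0 < H) (hM : 0 ≤ M) (hNp : 0 < Np) :
    StrictAntiOn (psSNR H M Np) (Iic 1) := by
  intro r hr ρ hρ hrρ
  have noise_pos {s : ℝ} (hs : s ≤ 1) : 0 < (1 - s) * M + Np :=
    add_pos_of_nonneg_of_pos (mul_nonneg (sub_nonneg.2 hs) hM) hNp
  have cross_sub : (1 - r) * H * ((1 - ρ) * M + Np) - (1 - ρ) * H * ((1 - r) * M + Np)
      = (ρ - r) * (H * Np) := by ring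
  have cross_pos : 0 < (ρ - r) * (H * Np) := mul_pos (sub_pos.2 hrρ) (mul_pos hH hNp)
  refine (div_lt_div_iff₀ (noise_pos hρ) (noise_pos hr)).2 (sub_pos.1 ?_)
  exact cross_sub ▸ cross_pos

theorem psRate_strictAntiOn (hH : 0 < H) (hM : 0 ≤ M) (hNp : 0 < Np) :
    StrictAntiOn (psRate H M Np) (Iic 1) := by
  intro r hr ρ hρ hrρ
  have hpos : 0 < 1 + psSNR H M Np ρ :=
    add_pos_of_pos_of_nonneg one_pos (psSNR_nonneg hH.le hM hNp.le hρ)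
  have hsnr : psSNR H M Np ρ < psSNR H M Np r := psSNR_strictAntiOn hH hM hNp hr hρ hrρ
  unfold psRate
  gcongr
  exact one_lt_two

end PowerSplitting

theorem stmt_7_general {H1 H2 Np N Nu a : ℝ} (hH1 : 0 < H1) (hH2 : 0 < H2) (hNp : 0 < Np)
    (hN : 0 ≤ N) (hNu : Nu = H2 + N) (ha : a = H1 + H2 + N) {φ ψ : ℝ → ℝ}
    (hφ : ContinuousOn φ (Ici 0)) (hψ : ContinuousOn ψ (Ici 0)) {ρ R1 R2 : ℝ}
    (hρ : ρ ∈ Ioc (0 : ℝ) 1) (hR1 : 0 ≤ R1) (hR2 : 0 ≤ R2) (h1 : R1 ≤ psRate H1 Nu Np ρ)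
    (h2 : R2 ≤ psRate H2 N Np ρ) (hcost : φ R1 + φ R2 < ψ (ρ * a)) :
    ∃ ρ' R1' R2' : ℝ, ρ' ∈ Icc (0 : ℝ) 1 ∧ R1 < R1' ∧ R2 < R2' ∧
      R1' ≤ psRate H1 Nu Np ρ' ∧ R2' ≤ psRate H2 N Np ρ' ∧ φ R1' + φ R2' ≤ ψ (ρ' * a) := by
  have hNu_nonneg : 0 ≤ Nu := by rw [hNu]; positivity
  have ha_pos : 0 < a := by rw [ha]; positivity
  have hψρ : ContinuousAt (fun r ↦ ψ (r * a)) ρ :=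
    ContinuousAt.comp' (f := fun r ↦ r * a)
      (hψ.continuousAt (Ici_mem_nhds (mul_pos hρ.1 ha_pos))) (by fun_prop)
  obtain ⟨r, ⟨hr_pos, hrρ⟩, hr_cost⟩ :=
    exists_mem_Ioo_lt_of_continuousWithinAt_Iio hψρ.continuousWithinAt hρ.1 hcost
  have hr_le : r ≤ 1 := hrρ.le.trans hρ.2
  have h1_slack : R1 < psRate H1 Nu Np r :=
    h1.trans_lt (psRate_strictAntiOn hH1 hNu_nonneg hNp hr_le hρ.2 hrρ)
  have h2_slack : R2 < psRate H2 N Np r :=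
    h2.trans_lt (psRate_strictAntiOn hH2 hN hNp hr_le hρ.2 hrρ)
  have hφ_right {R : ℝ} (hR : 0 ≤ R) : ContinuousWithinAt φ (Ioi R) R :=
    (hφ R hR).mono (Ioi_subset_Ici hR)
  obtain ⟨R1', hR1', R2', hR2', hcost'⟩ := exists_mem_Ioo_add_lt_of_continuousWithinAt_Ioi
    (hφ_right hR1) (hφ_right hR2) h1_slack h2_slack hr_cost
  exact ⟨r, R1', R2', ⟨hr_pos.le, hr_le⟩, hR1'.1, hR2'.1, hR1'.2.le, hR2'.2.le, hcost'.le⟩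

/-- Classical PS-SWIPT MAC with SIC decoding: if the decoding-cost constraint
`φ(R1) + φ(R2) < ψ(ρ·a)` is strict at `(ρ, R1, R2)` with `ρ ∈ (0,1]`, then
both rates can be strictly increased while keeping all three constraints, so
such a rate pair does not lie on the maximum departure region boundary of the
SIC scheme. -/
theorem stmt_7 (H1 H2 Np N : ℝ) (hH1 : 0 < H1) (hH2 : 0 < H2) (hNp : 0 < Np) (hN : 0 ≤ N)
    (Nu a : ℝ) (hNu : Nu = H2 + N) (ha : a = H1 + H2 + N)
    (φ ψ : ℝ → ℝ)
    (hφc : ContinuousOn φ (Set.Ici 0)) (hψc : ContinuousOn ψ (Set.Ici 0))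
    (hφmap : ∀ x : ℝ, 0 ≤ x → 0 ≤ φ x) (hψmap : ∀ x : ℝ, 0 ≤ x → 0 ≤ ψ x)
    (hφ : StrictMonoOn φ (Set.Ici 0)) (hψ : MonotoneOn ψ (Set.Ici 0))
    (ρ R1 R2 : ℝ) (hρ : ρ ∈ Set.Ioc (0 : ℝ) 1) (hR1 : 0 ≤ R1) (hR2 : 0 ≤ R2)
    (h1 : R1 ≤ (1/2) * Real.logb 2 (1 + (1 - ρ) * H1 / ((1 - ρ) * Nu + Np)))
    (h2 : R2 ≤ (1/2) * Real.logb 2 (1 + (1 - ρ) * H2 / ((1 - ρ) * N + Np)))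
    (hcost : φ R1 + φ R2 < ψ (ρ * a)) :
    ∃ ρ' R1' R2' : ℝ, ρ' ∈ Set.Icc (0 : ℝ) 1 ∧ R1 < R1' ∧ R2 < R2' ∧
      R1' ≤ (1/2) * Real.logb 2 (1 + (1 - ρ') * H1 / ((1 - ρ') * Nu + Np)) ∧
      R2' ≤ (1/2) * Real.logb 2 (1 + (1 - ρ') * H2 / ((1 - ρ') * N + Np)) ∧
      φ R1' + φ R2' ≤ ψ (ρ' * a) :=
  stmt_7_general hH1 hH2 hNp hN hNu ha hφc hψc hρ hR1 hR2 h1 h2 hcost
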